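/- Let x ∈ O(m,n) be an element not lying in A, with rank r and decomposition x = x̌ + x̄. Then the level of x is at least 1; equivalently, there exists α ∈ supp(x̌) with α(0) < α(r). -/

import Mathlib

/-!
Write `x = x̌ + x̄` and suppose that every `α ∈ supp x̌` has `α 0 = α r`, so that `α` is constant on
`{0, …, r}`; every `α ∈ supp x̄` is constantly `n` on `{r, …, m}`. The argument has two ingredients.

* A rigidity lemma (`eq_zero_of_nonneg`): if `y` has coefficient sum `0` and `(yβ)_γ ≥ 0` for all
  injective `β`, `γ`, then `y = 0`. By induction on `p` one shows `yβ = 0` for injective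
  `β : [p] → [m]`; the inductive step (`eq_zero_of_faces`) concerns `w = yβ` with all faces zero.
  The polynomial `∏ᵢ (γ(i+1) - γ(i))` has fewer factors than there are vertices, so each of its
  monomials ignores some vertex and pairs to zero with `w`. As it is positive on injective `γ` and
  vanishes on the others, `w_γ = 0` for injective `γ`. A pointwise minimal element `γ` of `supp w`
  therefore repeats a value, `γ(k) = γ(k+1)`, and the vanishing of the `k`-th face produces
  a strictly smaller element of the support; so `w = 0`.

* The coefficient sums of `x̌` and `x̄` are nonnegative with sum `1`, so one of them is `0`. Whichever
  part it is satisfies the hypotheses of the rigidity lemma (`bar_nonneg`, `check_nonneg`):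
  `(x̄β)_γ` does not change when `β` is replaced by `β ⊓ r`, and `(x̌β)_γ` does not change when `β`
  is replaced by `β ⊔ r`; after this replacement the other part contributes only constant operators,
  which are invisible to injective `γ : [p] → [n]` with `p ≥ 1`. The vertices `p = 0` are treated
  separately. Hence `x̄ = 0` or `x̌ = 0`, contradicting the choice of `r` or `x ∉ A`.
-/

abbrev ZD (a b : ℕ) := (Fin a →o Fin b) →₀ ℤ

noncomputable def act {a b c : ℕ} (x : ZD b c) (β : Fin a →o Fin b) : ZD a c :=
  Finsupp.mapDomain (fun α => α.comp β) x

def face {m : ℕ} (i : Fin (m+1)) : Fin m →o Fin (m+1) :=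
  ⟨i.succAbove, (Fin.succAboveOrderEmb i).monotone⟩

def degen {m : ℕ} (i : Fin m) : Fin (m+1) →o Fin m :=
  ⟨i.predAbove, Fin.predAbove_right_monotone i⟩

def memO {a b : ℕ} (x : ZD a b) : Prop :=
  (x.sum fun _ c => c) = 1 ∧
    ∀ (p : ℕ) (β : Fin (p+1) →o Fin a) (γ : Fin (p+1) →o Fin b),
      Function.Injective ⇑β → Function.Injective ⇑γ → 0 ≤ act x β γ

/-- The witness operation `x ▽ₖ y`, for `x, y ∈ ℤΔ([m],[n])` and `1 ≤ k ≤ m`. -/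
noncomputable def fill {m b : ℕ} (k : ℕ) (h1 : 1 ≤ k) (h2 : k ≤ m)
    (x y : ZD (m+1) b) : ZD (m+2) b :=
  act x (degen ⟨k, by omega⟩)
    - act (act (act x (face ⟨k-1, by omega⟩)) (degen ⟨k-1, by omega⟩)) (degen ⟨k-1, by omega⟩)
    + act y (degen ⟨k-1, by omega⟩)

/-- The pasting operation `x ⋆ₖ y`. -/
noncomputable def paste {m b : ℕ} (k : ℕ) (h1 : 1 ≤ k) (h2 : k ≤ m)
    (x y : ZD (m+1) b) : ZD (m+1) b :=
  x - act (act x (face ⟨k-1, by omega⟩)) (degen ⟨k-1, by omega⟩) + y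

/-- `x` is degenerate at `k`, i.e. `x = y σₖ` for some `y` one dimension lower. -/
def isDegenAt {a b : ℕ} (x : ZD a b) (k : ℕ) : Prop :=
  ∃ (p : ℕ) (hp : a = p + 1) (hk : k < p) (y : ZD p b),
    x = hp ▸ act y (degen ⟨k, hk⟩)

def isDegen {a b : ℕ} (x : ZD a b) : Prop := ∃ k, isDegenAt x k

/-- The number of preimages of the top element `n` under `α`. -/
def npre {a n : ℕ} (α : Fin a →o Fin (n+1)) : ℕ :=
  (Finset.univ.filter fun i => α i = Fin.last n).card

/-- `x` lies in the simplicial subset `A`: all operators in the support of `x`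
have equally many preimages of the top element. -/
def inA {a n : ℕ} (x : ZD a (n+1)) : Prop :=
  ∀ α ∈ x.support, ∀ β ∈ x.support, npre α = npre β

/-- `r` is the rank of `x`: the least `i` such that some `α ∈ supp x` has `α i = n`. -/
def isRank {a n : ℕ} (x : ZD a (n+1)) (r : Fin a) : Prop :=
  IsLeast {i : Fin a | ∃ α ∈ x.support, α i = Fin.last n} r

/-- `x̌`: the part of `x` supported on operators with `α r < n`. -/
noncomputable def checkPart {a n : ℕ} (x : ZD a (n+1)) (r : Fin a) : ZD a (n+1) :=
  x.filter (fun α => ¬ (α r = Fin.last n))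

/-- `x̄`: the part of `x` supported on operators with `α r = n`. -/
noncomputable def barPart {a n : ℕ} (x : ZD a (n+1)) (r : Fin a) : ZD a (n+1) :=
  x.filter (fun α => α r = Fin.last n)

/-- `ℓ` is the level of `x` (with rank `r`). -/
def isLevel {a n : ℕ} (x : ZD a (n+1)) (r ℓ : Fin a) : Prop :=
  IsLeast {i : Fin a | ∀ α ∈ (checkPart x r).support, α i = α r} ℓ

/-- Condition (†): `x̄` is degenerate at `ℓ - 1`. -/
def dagger {a n : ℕ} (x : ZD a (n+1)) (r ℓ : Fin a) : Prop :=
  isDegenAt (barPart x r) ((ℓ : ℕ) - 1)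

/-- The corank of `x`: the greatest number of preimages of `n` among operators in `supp x`. -/
def corank {a n : ℕ} (x : ZD a (n+1)) : ℕ := x.support.sup npre

/-- `u = x̌ + (x̄ ∂ℓ) σ(ℓ-1)`. -/
noncomputable def uPart {m n : ℕ} (x : ZD (m+1) (n+1)) (r ℓ : Fin (m+1))
    (h1 : 1 ≤ (ℓ : ℕ)) : ZD (m+1) (n+1) :=
  checkPart x r
    + act (act (barPart x r) (face ℓ)) (degen ⟨(ℓ:ℕ)-1, by have := ℓ.isLt; omega⟩)

/-- `v = (x̌ ∂(ℓ-1)) σ(ℓ-1) + x̄`. -/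
noncomputable def vPart {m n : ℕ} (x : ZD (m+1) (n+1)) (r ℓ : Fin (m+1))
    (h1 : 1 ≤ (ℓ : ℕ)) : ZD (m+1) (n+1) :=
  act (act (checkPart x r) (face ⟨(ℓ:ℕ)-1, by have := ℓ.isLt; omega⟩))
      (degen ⟨(ℓ:ℕ)-1, by have := ℓ.isLt; omega⟩)
    + barPart x r

/-- The parent `w = x̌ σℓ + x̄ σ(ℓ-1)`. -/
noncomputable def parent {m n : ℕ} (x : ZD (m+1) (n+1)) (r ℓ : Fin (m+1)) :
    ZD (m+2) (n+1) :=
  act (checkPart x r) (degen ℓ)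
    + act (barPart x r) (degen ⟨(ℓ:ℕ)-1, by have := ℓ.isLt; omega⟩)

/-- Bilinear extension of composition: `(x ∘ y)_γ = Σ_{α∘β = γ} x_α · y_β`. -/
noncomputable def zcomp {p m n : ℕ} (x : ZD m n) (y : ZD p m) : ZD p n :=
  x.sum fun α c => c • Finsupp.mapDomain (fun β => α.comp β) y

/-! ### Coefficients of `xβ` -/

noncomputable instance fintypeOrderHom (a b : ℕ) : Fintype (Fin a →o Fin b) :=
  Fintype.ofInjective (fun α => (α : Fin a → Fin b)) DFunLike.coe_injective

lemma act_apply {a b c : ℕ} (y : ZD b c) (β : Fin a →o Fin b) (γ : Fin a →o Fin c) :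
    act y β γ = y.sum fun α k => if α.comp β = γ then k else 0 := by
  classical
  simp [act, Finsupp.mapDomain, Finsupp.sum_apply, Finsupp.single_apply]

lemma act_add {a b c : ℕ} (y z : ZD b c) (β : Fin a →o Fin b) :
    act (y + z) β = act y β + act z β := Finsupp.mapDomain_add

lemma act_act {a b c d : ℕ} (y : ZD c d) (β : Fin b →o Fin c) (δ : Fin a →o Fin b) :
    act (act y β) δ = act y (β.comp δ) := by
  unfold act
  rw [← Finsupp.mapDomain_comp]
  rfl

lemma act_id {b c : ℕ} (y : ZD b c) : act y OrderHom.id = y := by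
  unfold act
  exact Finsupp.mapDomain_id

lemma act_eq_zero {a b c : ℕ} {y : ZD b c} {β : Fin a →o Fin b} {γ : Fin a →o Fin c}
    (h : ∀ α ∈ y.support, α.comp β ≠ γ) : act y β γ = 0 := by
  rw [act_apply]
  exact Finset.sum_eq_zero fun α hα => if_neg (h α hα)

lemma act_congr {a a' b c : ℕ} {y : ZD b c} {β : Fin a →o Fin b} {γ : Fin a →o Fin c}
    {β' : Fin a' →o Fin b} {γ' : Fin a' →o Fin c}
    (h : ∀ α ∈ y.support, (α.comp β = γ ↔ α.comp β' = γ')) : act y β γ = act y β' γ' := by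
  rw [act_apply, act_apply]
  refine Finset.sum_congr rfl fun α hα => ?_
  simp only [h α hα]

/-- Pairing `yβ` with a function `G` on operators. -/
lemma sum_act_mul {a b c : ℕ} (y : ZD b c) (β : Fin a →o Fin b) (G : (Fin a →o Fin c) → ℤ) :
    ∑ γ, act y β γ * G γ = y.sum fun α k => k * G (α.comp β) := by
  have h : (act y β).sum (fun γ k => k * G γ) = y.sum fun α k => k * G (α.comp β) :=
    Finsupp.sum_mapDomain_index (by simp) (by intros; ring)
  rw [← h, Finsupp.sum_fintype _ _ (by simp)]

lemma sum_act {a b c : ℕ} (y : ZD b c) (β : Fin a →o Fin b) :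
    ∑ γ, act y β γ = y.sum fun _ k => k := by
  simpa using sum_act_mul y β fun _ => 1

/-! ### Rigidity -/

/-- If all faces of `w` vanish, then `w` pairs to zero with `∏ᵢ (γ(i+1) - γ(i))`: every monomial in
the expansion omits one of the `p + 1` vertices. -/
lemma sum_prod_diff_eq_zero {p b : ℕ} (w : ZD (p+1) b) (hf : ∀ k, act w (face k) = 0) :
    ∑ γ, w γ * ∏ i : Fin p, (((γ i.succ : ℕ) : ℤ) - ((γ i.castSucc : ℕ) : ℤ)) = 0 := by
  classical
  have hmono : ∀ (v : Fin p → Fin (p+1)),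
      ∑ γ, w γ * ∏ i : Fin p, ((γ (v i) : ℕ) : ℤ) = 0 := by
    intro v
    obtain ⟨k, hk⟩ : ∃ k, ∀ i, v i ≠ k := by
      by_contra! hcon
      have := Fintype.card_le_of_surjective v hcon
      simp at this
    choose u hu using fun i => Fin.exists_succAbove_eq (hk i)
    have h := sum_act_mul w (face k) fun δ => ∏ i : Fin p, ((δ (u i) : ℕ) : ℤ)
    rw [hf k] at h
    simp only [Finsupp.coe_zero, Pi.zero_apply, zero_mul, Finset.sum_const_zero] at h
    rw [Finsupp.sum_fintype _ _ (by simp)] at h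
    rw [h]
    refine Finset.sum_congr rfl fun γ _ => ?_
    congr 1
    refine Finset.prod_congr rfl fun i _ => ?_
    rw [← hu i]
    rfl
  have hexp : ∀ γ : Fin (p+1) →o Fin b,
      w γ * ∏ i : Fin p, (((γ i.succ : ℕ) : ℤ) - ((γ i.castSucc : ℕ) : ℤ)) =
      ∑ s : Finset (Fin p), (∏ i : Fin p, if i ∈ s then (1 : ℤ) else -1) *
        (w γ * ∏ i : Fin p, ((γ (if i ∈ s then i.succ else i.castSucc) : ℕ) : ℤ)) := by
    intro γ
    simp only [sub_eq_add_neg]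
    rw [Finset.prod_add, Finset.powerset_univ, Finset.mul_sum]
    refine Finset.sum_congr rfl fun s _ => ?_
    rw [mul_left_comm (∏ i : Fin p, if i ∈ s then (1 : ℤ) else -1), ← Finset.prod_mul_distrib]
    congr 1
    have e : ∀ i : Fin p, (if i ∈ s then (1 : ℤ) else -1) *
        ((γ (if i ∈ s then i.succ else i.castSucc) : ℕ) : ℤ) =
        if i ∈ s then ((γ i.succ : ℕ) : ℤ) else -((γ i.castSucc : ℕ) : ℤ) := by
      intro i; split_ifs <;> simp
    simp only [e]
    rw [Finset.prod_ite]
    congr 1 <;> refine Finset.prod_congr ?_ fun _ _ => rfl <;> ext <;> simp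
  simp only [hexp]
  rw [Finset.sum_comm]
  refine Finset.sum_eq_zero fun s _ => ?_
  rw [← Finset.mul_sum, hmono, mul_zero]

lemma exists_repeat {p b : ℕ} {γ : Fin (p+1) →o Fin b} (h : ¬ Function.Injective γ) :
    ∃ i : Fin p, γ i.castSucc = γ i.succ := by
  by_contra! hcon
  exact h (Fin.strictMono_iff_lt_succ.2 fun i =>
    lt_of_le_of_ne (γ.monotone i.castSucc_le_succ) (hcon i)).injective

lemma eq_zero_of_faces {p b : ℕ} (w : ZD (p+1) b) (hf : ∀ k, act w (face k) = 0)
    (hn : ∀ γ : Fin (p+1) →o Fin b, Function.Injective γ → 0 ≤ w γ) : w = 0 := by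
  classical
  have hinj : ∀ γ : Fin (p+1) →o Fin b, Function.Injective γ → w γ = 0 := by
    intro γ hγ
    have hs := sum_prod_diff_eq_zero w hf
    rw [Finset.sum_eq_zero_iff_of_nonneg] at hs
    · have h1 := hs γ (Finset.mem_univ _)
      refine (mul_eq_zero.1 h1).resolve_right (Finset.prod_ne_zero_iff.2 fun i _ => ?_)
      have : γ i.castSucc < γ i.succ :=
        (γ.monotone.strictMono_of_injective hγ) i.castSucc_lt_succ
      have : (γ i.castSucc : ℕ) < γ i.succ := this
      omega
    · intro δ _
      by_cases hδ : Function.Injective δ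
      · refine mul_nonneg (hn δ hδ) (Finset.prod_nonneg fun i _ => ?_)
        have : (δ i.castSucc : ℕ) ≤ δ i.succ := δ.monotone i.castSucc_le_succ
        omega
      · obtain ⟨i, hi⟩ := exists_repeat hδ
        rw [Finset.prod_eq_zero (Finset.mem_univ i) (by rw [hi]; ring), mul_zero]
  by_contra hw
  obtain ⟨γ, hγ⟩ := (w.support.finite_toSet).exists_minimal
    (by simpa [Finset.nonempty_iff_ne_empty] using hw)
  have hγ0 : w γ ≠ 0 := by simpa using hγ.prop
  obtain ⟨i, hi⟩ := exists_repeat fun h => hγ0 (hinj γ h)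
  -- Any other operator with the same face opposite `i` is smaller than `γ`, as `γ i = γ (i + 1)`.
  have hface : act w (face i.castSucc) (γ.comp (face i.castSucc)) = w γ := by
    rw [act_apply]
    unfold Finsupp.sum
    rw [Finset.sum_eq_single γ]
    · simp
    · intro δ hδ hne
      refine if_neg fun heq => hne ?_
      have hagree : ∀ j, j ≠ i.castSucc → δ j = γ j := by
        intro j hj
        obtain ⟨l, rfl⟩ := Fin.exists_succAbove_eq hj
        exact DFunLike.congr_fun heq l
      have hle : δ ≤ γ := by
        intro j
        by_cases hj : j = i.castSucc
        · subst hj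
          change δ i.castSucc ≤ γ i.castSucc
          rw [hi, ← hagree i.succ i.castSucc_lt_succ.ne']
          exact δ.monotone i.castSucc_le_succ
        · exact (hagree j hj).le
      exact le_antisymm hle (hγ.le_of_le hδ hle)
    · intro h
      simpa using h
  rw [hf] at hface
  exact hγ0 (by simpa using hface.symm)

/-- Rigidity: a nonnegative element of coefficient sum zero vanishes. -/
lemma eq_zero_of_nonneg {a b : ℕ} (y : ZD a b) (h0 : (y.sum fun _ k => k) = 0)
    (hn : ∀ (p : ℕ) (β : Fin (p+1) →o Fin a) (γ : Fin (p+1) →o Fin b),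
      Function.Injective β → Function.Injective γ → 0 ≤ act y β γ) : y = 0 := by
  have key : ∀ (p : ℕ) (β : Fin p →o Fin a), Function.Injective β → act y β = 0 := by
    intro p
    induction p with
    | zero =>
      intro β _
      ext γ
      have h := sum_act y β
      rw [h0, Finset.sum_eq_single γ] at h
      · simpa using h
      · intro δ _ hne
        exact (hne (by ext i; exact i.elim0)).elim
      · simp
    | succ p ih =>
      intro β hβ
      refine eq_zero_of_faces _ (fun k => ?_) fun γ hγ => hn p β γ hβ hγ
      rw [act_act]
      exact ih _ (hβ.comp Fin.succAbove_right_injective)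
  rw [← act_id y]
  exact key a OrderHom.id Function.injective_id

/-! ### The two parts of `x` -/

/-- The operator `[0] → [a]` with value `i`. -/
def vtx {a : ℕ} (i : Fin a) : Fin 1 →o Fin a := OrderHom.const _ i

/-- The operator `[1] → [a]` with values `i ≤ j`. -/
def edge {a : ℕ} (i j : Fin a) (h : i ≤ j) : Fin 2 →o Fin a :=
  ⟨![i, j], by
    intro s t hst
    fin_cases s <;> fin_cases t <;> simp_all⟩

lemma edge_injective {a : ℕ} {i j : Fin a} (h : i < j) :
    Function.Injective (edge i j h.le) := by
  intro s t hst
  fin_cases s <;> fin_cases t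
  · rfl
  · exact (h.ne hst).elim
  · exact (h.ne' hst).elim
  · rfl

lemma eq_vtx {a : ℕ} (γ : Fin 1 →o Fin a) : γ = vtx (γ 0) := by
  ext i; rw [Subsingleton.elim i 0]; rfl

lemma vtx_injective {a : ℕ} (i : Fin a) : Function.Injective (vtx i) :=
  fun s t _ => Subsingleton.elim s t

lemma comp_vtx {a b : ℕ} (α : Fin a →o Fin b) (i : Fin a) : α.comp (vtx i) = vtx (α i) := rfl

lemma vtx_inj {a : ℕ} {i j : Fin a} : vtx i = vtx j ↔ i = j :=
  ⟨fun h => DFunLike.congr_fun h 0, fun h => h ▸ rfl⟩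

lemma comp_edge_eq {a b : ℕ} (α : Fin a →o Fin b) {i j : Fin a} (h : i ≤ j) {k l : Fin b}
    (h' : k ≤ l) : α.comp (edge i j h) = edge k l h' ↔ α i = k ∧ α j = l := by
  constructor
  · intro e
    exact ⟨DFunLike.congr_fun e 0, DFunLike.congr_fun e 1⟩
  · rintro ⟨e0, e1⟩
    ext s
    fin_cases s
    · exact congrArg Fin.val e0
    · exact congrArg Fin.val e1

/-- A coefficient at an injective `γ` with at least two vertices vanishes if all the operators in
the support become constant after restriction along `β`. -/
lemma act_eq_zero_of_const {p b c : ℕ} {y : ZD b c} {β : Fin (p+2) →o Fin b}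
    {γ : Fin (p+2) →o Fin c} (hγ : Function.Injective γ)
    (h : ∀ α ∈ y.support, α (β 0) = α (β 1)) : act y β γ = 0 := by
  refine act_eq_zero fun α hα e => ?_
  have h01 : γ 0 = γ 1 := by rw [← e]; exact h α hα
  exact absurd (hγ h01) (by simp)

lemma act_eq_zero_of_not_injective {p b c : ℕ} {y : ZD b c} {β : Fin p →o Fin b}
    {γ : Fin p →o Fin c} (hγ : Function.Injective γ) (hβ : ¬ Function.Injective β) :
    act y β γ = 0 := by
  refine act_eq_zero fun α _ e => hβ fun i j hij => hγ ?_
  rw [← e]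
  exact congrArg α hij

lemma mem_checkPart {a n : ℕ} {x : ZD a (n+1)} {r : Fin a} {α : Fin a →o Fin (n+1)} :
    α ∈ (checkPart x r).support ↔ α ∈ x.support ∧ α r ≠ Fin.last n := by
  classical
  simp [checkPart, Finsupp.support_filter]

lemma mem_barPart {a n : ℕ} {x : ZD a (n+1)} {r : Fin a} {α : Fin a →o Fin (n+1)} :
    α ∈ (barPart x r).support ↔ α ∈ x.support ∧ α r = Fin.last n := by
  classical
  simp [barPart, Finsupp.support_filter]

lemma bar_add_check {a n : ℕ} (x : ZD a (n+1)) (r : Fin a) :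
    barPart x r + checkPart x r = x := Finsupp.filter_add_filter_not x _

lemma act_split {a b n : ℕ} (x : ZD b (n+1)) (r : Fin b) (β : Fin a →o Fin b)
    (γ : Fin a →o Fin (n+1)) :
    act x β γ = act (barPart x r) β γ + act (checkPart x r) β γ := by
  conv_lhs => rw [← bar_add_check x r, act_add]
  rfl

lemma bar_of_le {a n : ℕ} {x : ZD a (n+1)} {r i : Fin a} {α : Fin a →o Fin (n+1)}
    (hα : α ∈ (barPart x r).support) (hi : r ≤ i) : α i = Fin.last n :=
  Fin.last_le_iff.1 ((mem_barPart.1 hα).2 ▸ α.monotone hi)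

lemma bar_of_lt {a n : ℕ} {x : ZD a (n+1)} {r i : Fin a} (hr : isRank x r)
    {α : Fin a →o Fin (n+1)} (hα : α ∈ (barPart x r).support) (hi : i < r) : α i ≠ Fin.last n :=
  fun h => absurd (hr.2 ⟨α, (mem_barPart.1 hα).1, h⟩) (not_le.2 hi)

/-- If `x̄` has coefficient sum zero and `x̌` is constant on `{0, …, r}`, then `x̄` satisfies the
hypotheses of `eq_zero_of_nonneg`. -/
lemma bar_nonneg {m n : ℕ} {x : ZD (m+1) (n+1)} (hx : memO x) {r : Fin (m+1)} (hr : isRank x r)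
    (hc : ∀ α ∈ (checkPart x r).support, ∀ i ≤ r, α i = α r)
    (hs : ((barPart x r).sum fun _ k => k) = 0)
    (p : ℕ) (β : Fin (p+1) →o Fin (m+1)) (γ : Fin (p+1) →o Fin (n+1))
    (_hβ : Function.Injective β) (hγ : Function.Injective γ) :
    0 ≤ act (barPart x r) β γ := by
  classical
  cases p with
  | zero =>
    rw [eq_vtx β, eq_vtx γ]
    generalize β 0 = b
    generalize γ 0 = c
    rcases le_or_gt r b with hb | hb
    · by_cases hcn : c = Fin.last n
      · have h : act (barPart x r) (vtx b) (vtx c) = (barPart x r).sum fun _ k => k := by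
          rw [act_apply]
          refine Finset.sum_congr rfl fun α hα => if_pos ?_
          rw [comp_vtx, bar_of_le hα hb, hcn]
        rw [h, hs]
      · refine (act_eq_zero fun α hα e => hcn ?_).ge
        rw [comp_vtx, vtx_inj, bar_of_le hα hb] at e
        exact e.symm
    · by_cases hcn : c = Fin.last n
      · refine (act_eq_zero fun α hα e => bar_of_lt hr hα hb ?_).ge
        rw [comp_vtx, vtx_inj] at e
        rw [e, hcn]
      · -- The coefficient of the vertex `c` at `b` is that of the edge `(c, n)` at `(b, r)`.
        have hcl : c < Fin.last n := Fin.lt_last_iff_ne_last.2 hcn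
        have h1 : act (barPart x r) (vtx b) (vtx c) =
            act (barPart x r) (edge b r hb.le) (edge c (Fin.last n) hcl.le) := by
          refine act_congr fun α hα => ?_
          rw [comp_vtx, vtx_inj, comp_edge_eq]
          exact ⟨fun h => ⟨h, bar_of_le hα le_rfl⟩, fun h => h.1⟩
        have h2 := hx.2 1 _ _ (edge_injective hb) (edge_injective hcl)
        rw [act_split x r, act_eq_zero_of_const (y := checkPart x r) (edge_injective hcl)
          (fun α hα => hc α hα b hb.le), add_zero] at h2
        rw [h1]
        exact h2
  | succ p =>
    have h1 : act (barPart x r) β γ = act (barPart x r) (β ⊓ OrderHom.const _ r) γ := by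
      refine act_congr fun α hα => ?_
      have : α.comp β = α.comp (β ⊓ OrderHom.const _ r) := by
        ext i
        change (α (β i) : ℕ) = α (β i ⊓ r)
        rcases le_total (β i) r with h | h
        · rw [inf_eq_left.2 h]
        · rw [inf_eq_right.2 h, bar_of_le hα h, bar_of_le hα le_rfl]
      rw [this]
    rw [h1]
    by_cases hi : Function.Injective (β ⊓ OrderHom.const _ r : Fin (p+1+1) →o Fin (m+1))
    · have h2 := hx.2 _ _ γ hi hγ
      rwa [act_split x r, act_eq_zero_of_const (y := checkPart x r) hγ, add_zero] at h2
      intro α hα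
      exact (hc α hα _ inf_le_right).trans (hc α hα _ inf_le_right).symm
    · exact (act_eq_zero_of_not_injective hγ hi).ge

/-- For `c < n`, only `x̌` contributes to the coefficient of `c` at a vertex `b ≥ r`. -/
lemma check_vtx_nonneg {m n : ℕ} {x : ZD (m+1) (n+1)} (hx : memO x) {r b : Fin (m+1)}
    (hb : r ≤ b) {c : Fin (n+1)} (hcn : c ≠ Fin.last n) :
    0 ≤ act (checkPart x r) (vtx b) (vtx c) := by
  have h := hx.2 0 (vtx b) (vtx c) (vtx_injective _)
    (vtx_injective _)
  rwa [act_split x r, act_eq_zero (y := barPart x r), zero_add] at h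
  intro α hα e
  rw [comp_vtx, vtx_inj, bar_of_le hα hb] at e
  exact hcn e.symm

lemma check_vtx_rank {m n : ℕ} {x : ZD (m+1) (n+1)} {r : Fin (m+1)} :
    act (checkPart x r) (vtx r) (vtx (Fin.last n)) = 0 := by
  refine act_eq_zero fun α hα e => (mem_checkPart.1 hα).2 ?_
  rwa [comp_vtx, vtx_inj] at e

/-- Restricted to vertices `≥ r`, the part `x̄` is a multiple of the constant operator `n`. -/
lemma check_nonneg_of_le {m n p : ℕ} {x : ZD (m+1) (n+1)} (hx : memO x) {r : Fin (m+1)}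
    {β : Fin (p+2) →o Fin (m+1)} {γ : Fin (p+2) →o Fin (n+1)} (hle : ∀ i, r ≤ β i)
    (hβ : Function.Injective β) (hγ : Function.Injective γ) :
    0 ≤ act (checkPart x r) β γ := by
  have h2 := hx.2 _ β γ hβ hγ
  rwa [act_split x r, act_eq_zero_of_const (y := barPart x r) hγ, zero_add] at h2
  intro α hα
  rw [bar_of_le hα (hle _), bar_of_le hα (hle _)]

/-- If `x̌` has coefficient sum zero, its coefficient of `n` at a vertex `b > r` is nonnegative.
The sum of `x̌_α (α(b) - α(r))` is nonnegative by positivity on the edge `(r, b)`, and that of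
`x̌_α α(r)` is zero, so `∑_α x̌_α (n - α(b)) ≤ 0`; this sum bounds minus the coefficient from
above. -/
lemma check_vtx_last_nonneg {m n : ℕ} {x : ZD (m+1) (n+1)} (hx : memO x) {r b : Fin (m+1)}
    (hs : ((checkPart x r).sum fun _ k => k) = 0) (hb : r < b) :
    0 ≤ act (checkPart x r) (vtx b) (vtx (Fin.last n)) := by
  classical
  set z := checkPart x r with hz
  have hsr : ∀ γ, act z (vtx r) γ = 0 := by
    have h := sum_act z (vtx r)
    rw [hs, Finset.sum_eq_zero_iff_of_nonneg] at h
    · exact fun γ => h γ (Finset.mem_univ _)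
    · intro γ _
      rw [eq_vtx γ]
      by_cases hγ : γ 0 = Fin.last n
      · rw [hγ, check_vtx_rank]
      · exact check_vtx_nonneg hx le_rfl hγ
  have hr0 : (z.sum fun α k => k * ((α r : ℕ) : ℤ)) = 0 := by
    have h := sum_act_mul z (vtx r) fun γ => ((γ 0 : ℕ) : ℤ)
    simp only [hsr, zero_mul, Finset.sum_const_zero] at h
    exact h.symm
  have hrb : 0 ≤ z.sum fun α k => k * (((α b : ℕ) : ℤ) - ((α r : ℕ) : ℤ)) := by
    have h := sum_act_mul z (edge r b hb.le) fun γ => ((γ 1 : ℕ) : ℤ) - ((γ 0 : ℕ) : ℤ)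
    refine le_of_le_of_eq (Finset.sum_nonneg fun γ _ => ?_) h
    by_cases hγ : Function.Injective γ
    · refine mul_nonneg (check_nonneg_of_le hx (fun i => ?_) (edge_injective hb) hγ) ?_
      · fin_cases i
        · exact le_rfl
        · exact hb.le
      · have : (γ 0 : ℕ) ≤ γ 1 := γ.monotone (Fin.zero_le _)
        omega
    · obtain ⟨i, hi⟩ := exists_repeat hγ
      have hi' : γ 0 = γ 1 := by rwa [Subsingleton.elim i 0] at hi
      rw [hi', sub_self, mul_zero]
  have hb0 : 0 ≤ z.sum fun α k => k * ((α b : ℕ) : ℤ) := by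
    have : (z.sum fun α k => k * (((α b : ℕ) : ℤ) - ((α r : ℕ) : ℤ))) =
        (z.sum fun α k => k * ((α b : ℕ) : ℤ)) - z.sum fun α k => k * ((α r : ℕ) : ℤ) := by
      rw [← Finsupp.sum_sub]
      simp only [mul_sub]
    linarith
  have hb1 : 0 ≤ ∑ γ, act z (vtx b) γ * ((γ 0 : ℕ) : ℤ) := by
    rw [sum_act_mul z (vtx b) fun γ => ((γ 0 : ℕ) : ℤ)]
    exact hb0
  have hsb := sum_act z (vtx b)
  rw [hs] at hsb
  have hle : ∑ γ, (act z (vtx b) γ - if γ = vtx (Fin.last n) then act z (vtx b) γ else 0) ≤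
      ∑ γ, (act z (vtx b) γ * n - act z (vtx b) γ * ((γ 0 : ℕ) : ℤ)) := by
    refine Finset.sum_le_sum fun γ _ => ?_
    split_ifs with hγ
    · subst hγ
      simp [vtx]
    · have hγ' : γ 0 ≠ Fin.last n := fun h => hγ (by rw [eq_vtx γ, h])
      have h1 : 0 ≤ act z (vtx b) γ := by
        rw [eq_vtx γ]
        exact check_vtx_nonneg hx hb.le hγ'
      have h2 : (γ 0 : ℕ) < n := Fin.lt_last_iff_ne_last.2 hγ'
      have h3 : (1 : ℤ) ≤ n - (γ 0 : ℕ) := by omega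
      nlinarith
  rw [Finset.sum_sub_distrib, Finset.sum_sub_distrib, ← Finset.sum_mul, hsb,
    Finset.sum_ite_eq' Finset.univ, if_pos (Finset.mem_univ _)] at hle
  linarith

/-- If `x̌` has coefficient sum zero and is constant on `{0, …, r}`, then it satisfies the
hypotheses of `eq_zero_of_nonneg`. -/
lemma check_nonneg {m n : ℕ} {x : ZD (m+1) (n+1)} (hx : memO x) {r : Fin (m+1)}
    (hc : ∀ α ∈ (checkPart x r).support, ∀ i ≤ r, α i = α r)
    (hs : ((checkPart x r).sum fun _ k => k) = 0)
    (p : ℕ) (β : Fin (p+1) →o Fin (m+1)) (γ : Fin (p+1) →o Fin (n+1))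
    (_hβ : Function.Injective β) (hγ : Function.Injective γ) :
    0 ≤ act (checkPart x r) β γ := by
  have h1 : act (checkPart x r) β γ = act (checkPart x r) (β ⊔ OrderHom.const _ r) γ := by
    refine act_congr fun α hα => ?_
    have : α.comp β = α.comp (β ⊔ OrderHom.const _ r) := by
      ext i
      change (α (β i) : ℕ) = α (β i ⊔ r)
      rcases le_total (β i) r with h | h
      · rw [sup_eq_right.2 h, hc α hα _ h]
      · rw [sup_eq_left.2 h]
    rw [this]
  rw [h1]
  have hle : ∀ i, r ≤ (β ⊔ OrderHom.const _ r : Fin (p+1) →o Fin (m+1)) i :=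
    fun i => le_sup_right
  generalize (β ⊔ OrderHom.const _ r : Fin (p+1) →o Fin (m+1)) = β' at hle
  cases p with
  | zero =>
    rw [eq_vtx β', eq_vtx γ]
    by_cases hγ' : γ 0 = Fin.last n
    · rw [hγ']
      rcases (hle 0).eq_or_lt with h | h
      · rw [← h, check_vtx_rank]
      · exact check_vtx_last_nonneg hx hs h
    · exact check_vtx_nonneg hx (hle 0) hγ'
  | succ p =>
    by_cases hi : Function.Injective β'
    · exact check_nonneg_of_le hx hle hi hγ
    · exact (act_eq_zero_of_not_injective hγ hi).ge

lemma bar_ne_zero {a n : ℕ} {x : ZD a (n+1)} {r : Fin a} (hr : isRank x r) :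
    barPart x r ≠ 0 := by
  obtain ⟨α, hα, h⟩ := hr.1
  intro h0
  have := mem_barPart.2 ⟨hα, h⟩
  rw [h0] at this
  simp at this

lemma check_ne_zero {a n : ℕ} {x : ZD a (n+1)} {r : Fin a} (hr : isRank x r) (hA : ¬ inA x) :
    checkPart x r ≠ 0 := by
  intro h0
  have hall : ∀ α ∈ x.support, ∀ i, α i = Fin.last n ↔ r ≤ i := by
    intro α hα i
    have hb : α ∈ (barPart x r).support := by
      refine mem_barPart.2 ⟨hα, ?_⟩
      by_contra hne
      have := mem_checkPart.2 ⟨hα, hne⟩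
      rw [h0] at this
      simp at this
    exact ⟨fun h => hr.2 ⟨α, hα, h⟩, fun h => bar_of_le hb h⟩
  refine hA fun α hα β hβ => ?_
  simp only [npre, hall α hα, hall β hβ]

lemma exists_check_lt {m n : ℕ} {x : ZD (m+1) (n+1)} (hx : memO x) (hA : ¬ inA x)
    {r : Fin (m+1)} (hr : isRank x r) : ∃ α ∈ (checkPart x r).support, α 0 < α r := by
  by_contra! hcon
  have hc : ∀ α ∈ (checkPart x r).support, ∀ i ≤ r, α i = α r := fun α hα i hi =>
    le_antisymm (α.monotone hi) ((hcon α hα).trans (α.monotone (Fin.zero_le i)))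
  have htot : ((barPart x r).sum fun _ k => k) + ((checkPart x r).sum fun _ k => k) = 1 := by
    rw [← hx.1, ← sum_act x OrderHom.id, ← sum_act (barPart x r) OrderHom.id,
      ← sum_act (checkPart x r) OrderHom.id, ← Finset.sum_add_distrib]
    exact Finset.sum_congr rfl fun γ _ => (act_split x r _ γ).symm
  have hcheck : 0 ≤ (checkPart x r).sum fun _ k => k := by
    rw [← sum_act _ (vtx r)]
    refine Finset.sum_nonneg fun γ _ => ?_
    rw [eq_vtx γ]
    by_cases hγ : γ 0 = Fin.last n
    · rw [hγ, check_vtx_rank]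
    · exact check_vtx_nonneg hx le_rfl hγ
  have hbar : 0 ≤ (barPart x r).sum fun _ k => k := by
    have h := hx.2 0 (vtx r) (vtx (Fin.last n)) (vtx_injective _)
      (vtx_injective _)
    rw [act_split x r, check_vtx_rank, add_zero, act_apply] at h
    refine le_of_le_of_eq h (Finset.sum_congr rfl fun α hα => if_pos ?_)
    rw [comp_vtx, bar_of_le hα le_rfl]
  rcases hbar.eq_or_lt with h | h
  · exact bar_ne_zero hr (eq_zero_of_nonneg _ h.symm (bar_nonneg hx hr hc h.symm))
  · have h0 : ((checkPart x r).sum fun _ k => k) = 0 := by omega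
    exact check_ne_zero hr hA (eq_zero_of_nonneg _ h0 (check_nonneg hx hc h0))

/-- Claim (level): the level of `x ∈ O(m,n) \ A` is at least 1; equivalently some
`α ∈ supp x̌` has `α 0 < α r`. -/
theorem stmt12 (m n : ℕ) (x : ZD (m+1) (n+1)) (hx : memO x) (hA : ¬ inA x)
    (r ℓ : Fin (m+1)) (hr : isRank x r) (hl : isLevel x r ℓ) :
    1 ≤ (ℓ : ℕ) ∧ ∃ α ∈ (checkPart x r).support, α 0 < α r := by
  obtain ⟨α, hα, h⟩ := exists_check_lt hx hA hr
  refine ⟨?_, α, hα, h⟩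
  by_contra hℓ
  have h0 : ℓ = 0 := Fin.ext (by simp only [Fin.val_zero]; omega)
  have := hl.1 α hα
  rw [h0] at this
  exact h.ne this
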